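/- Fix a unit vector v ∈ ℝ^d and let x₁,…,xₙ be i.i.d. standard Gaussian N(0, I_d) vectors in ℝ^d, n ≥ 2, with labels y_j = 1 if vᵀx_j > 0 and y_j = −1 otherwise. Then for every i ∈ [n] and every t ∈ ℝ, P[ Σ_{j≠i} (y_j x_j)ᵀ(y_i x_i) ≥ t ] ≥ P[ Σ_{j≠i} x_jᵀ x_i ≥ t ]. -/

import Mathlib

open MeasureTheory ProbabilityTheory Matrix

noncomputable section

/-- `X` has i.i.d. standard Gaussian entries (equivalently, its rows are i.i.d. `N(0, I_d)`). -/
structure IsGaussSample {Ω : Type*} [MeasurableSpace Ω] (μ : Measure Ω)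
    {n d : ℕ} (X : Ω → Matrix (Fin n) (Fin d) ℝ) : Prop where
  meas : ∀ i j, Measurable fun ω => X ω i j
  indep : iIndepFun (fun (p : Fin n × Fin d) ω => X ω p.1 p.2) μ
  law : ∀ i j, Measure.map (fun ω => X ω i j) μ = gaussianReal 0 1

lemma aux_refl {d : ℕ} (v : Fin d → ℝ) (hv : v ⬝ᵥ v = 1) :
    MeasurePreserving (fun x : Fin d → ℝ => (2 * (v ⬝ᵥ x)) • v - x)
      (Measure.pi (fun _ : Fin d => gaussianReal 0 1))
      (Measure.pi (fun _ : Fin d => gaussianReal 0 1)) := by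
  have hm : Measurable (fun x : Fin d → ℝ => (2 * (v ⬝ᵥ x)) • v - x) := by
    unfold dotProduct; fun_prop
  refine ⟨hm, ?_⟩
  set P := Measure.pi (fun _ : Fin d => gaussianReal 0 1) with hP
  set R := (Submodule.span ℝ {WithLp.toLp 2 v}).reflection with hR
  have h1 : P.map (WithLp.toLp 2) = stdGaussian (EuclideanSpace ℝ (Fin d)) := map_pi_eq_stdGaussian
  have h2 : (stdGaussian (EuclideanSpace ℝ (Fin d))).map R = stdGaussian _ := stdGaussian_map R
  have h3 : (stdGaussian (EuclideanSpace ℝ (Fin d))).map (WithLp.ofLp) = P := by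
    rw [← h1, Measure.map_map (by fun_prop) (by fun_prop)]
    exact Measure.map_id
  have hnorm : ‖WithLp.toLp 2 v‖ = 1 := by
    rw [EuclideanSpace.norm_eq]
    simp only [Real.norm_eq_abs, sq_abs]
    rw [Real.sqrt_eq_one]
    simpa [dotProduct, ← pow_two] using hv
  have hc : (fun x : Fin d → ℝ => (2 * (v ⬝ᵥ x)) • v - x)
      = WithLp.ofLp ∘ R ∘ WithLp.toLp 2 := by
    funext x
    simp only [Function.comp, hR, Submodule.reflection_singleton_apply, hnorm]
    ext k
    simp [PiLp.inner_apply, dotProduct, mul_comm]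
    ring
  rw [hc, ← Measure.map_map (by fun_prop) (by fun_prop),
    ← Measure.map_map (by fun_prop) (by fun_prop), h1, h2, h3]

def flipMap {d : ℕ} (v x : Fin d → ℝ) : Fin d → ℝ :=
  if 0 < v ⬝ᵥ x then x else (2 * (v ⬝ᵥ x)) • v - x

lemma aux_flip {d : ℕ} (v : Fin d → ℝ) (hv : v ⬝ᵥ v = 1) :
    MeasurePreserving (flipMap v)
      (Measure.pi (fun _ : Fin d => gaussianReal 0 1))
      (Measure.pi (fun _ : Fin d => gaussianReal 0 1)) := by
  have hR := aux_refl v hv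
  set P := Measure.pi (fun _ : Fin d => gaussianReal 0 1) with hP
  have hd : Measurable (fun x : Fin d → ℝ => v ⬝ᵥ x) := by
    unfold dotProduct; fun_prop
  have hs : MeasurableSet {x : Fin d → ℝ | 0 < v ⬝ᵥ x} := measurableSet_lt measurable_const hd
  have hm : Measurable (flipMap v) := Measurable.ite hs measurable_id hR.measurable
  refine ⟨hm, ?_⟩
  ext A hA
  rw [Measure.map_apply hm hA, ← measure_inter_add_sdiff _ hs, ← measure_inter_add_sdiff A hs]
  congr 1
  · congr 1
    ext x
    simp only [Set.mem_inter_iff, Set.mem_preimage, Set.mem_ofPred_eq, flipMap]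
    constructor <;> rintro ⟨h, h'⟩ <;> simp_all
  · rw [← hR.measure_preimage (hA.diff hs).nullMeasurableSet]
    congr 1
    ext x
    have : v ⬝ᵥ ((2 * (v ⬝ᵥ x)) • v - x) = v ⬝ᵥ x := by
      rw [dotProduct_sub, dotProduct_smul, hv, smul_eq_mul]; ring
    simp only [Set.mem_sdiff, Set.mem_preimage, Set.mem_ofPred_eq, flipMap, this]
    by_cases hx : 0 < v ⬝ᵥ x <;> simp [hx]

lemma flip_dot {d : ℕ} (v : Fin d → ℝ) (hv : v ⬝ᵥ v = 1) (x : Fin d → ℝ) :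
    v ⬝ᵥ flipMap v x = v ⬝ᵥ x := by
  unfold flipMap
  split_ifs
  · rfl
  · rw [dotProduct_sub, dotProduct_smul, hv, smul_eq_mul]; ring

def sgn {d : ℕ} (v x : Fin d → ℝ) : ℝ := if 0 < v ⬝ᵥ x then 1 else -1

lemma flip_ineq {d : ℕ} (v : Fin d → ℝ) (hv : v ⬝ᵥ v = 1) (x z : Fin d → ℝ) :
    x ⬝ᵥ z ≤ sgn v (flipMap v x) * sgn v (flipMap v z) * (flipMap v x ⬝ᵥ flipMap v z) := by
  simp only [sgn, flip_dot v hv]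
  simp only [flipMap]
  have hxv := dotProduct_comm x v
  split_ifs with h1 h2 h2 <;>
    simp only [dotProduct_sub, sub_dotProduct, smul_dotProduct, dotProduct_smul, hv, smul_eq_mul,
      hxv, one_mul, mul_one, le_refl] <;> nlinarith

lemma law_sample {Ω : Type*} [MeasurableSpace Ω] (μ : Measure Ω) [IsProbabilityMeasure μ]
    {n d : ℕ} (X : Ω → Matrix (Fin n) (Fin d) ℝ) (hX : IsGaussSample μ X) :
    MeasurePreserving (fun ω i j => X ω i j) μ
      (Measure.pi (fun _ : Fin n => Measure.pi (fun _ : Fin d => gaussianReal 0 1))) := by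
  have hmeas := hX.meas
  refine ⟨by fun_prop, ?_⟩
  have h := hX.indep.map_fun_eq_pi_map (fun p : Fin n × Fin d => (hX.meas p.1 p.2).aemeasurable)
  simp only [hX.law] at h
  have h4 := Measure.infinitePi_map_curry (ι := Fin n) (κ := Fin d) (fun _ _ => gaussianReal 0 1)
  simp only [Measure.infinitePi_eq_pi] at h4
  rw [← h4, ← h, Measure.map_map (by fun_prop) (by fun_prop)]
  rfl

/-- Stochastic dominance of the leave-one-out statistic with data-dependent labels
`yⱼ = sign(vᵀxⱼ)` over the same statistic with all labels equal to `+1`. -/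
theorem stmt12 {Ω : Type*} [MeasurableSpace Ω] (μ : Measure Ω) [IsProbabilityMeasure μ]
    (n d : ℕ) (hn : 2 ≤ n)
    (v : Fin d → ℝ) (hv : Real.sqrt (∑ j, (v j) ^ 2) = 1)
    (X : Ω → Matrix (Fin n) (Fin d) ℝ) (hX : IsGaussSample μ X)
    (y : Ω → Fin n → ℝ)
    (hy : ∀ ω j, y ω j = if 0 < v ⬝ᵥ X ω j then 1 else -1) :
    ∀ (i : Fin n) (t : ℝ),
      μ {ω | t ≤ ∑ j ∈ Finset.univ.erase i, X ω j ⬝ᵥ X ω i} ≤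
        μ {ω | t ≤ ∑ j ∈ Finset.univ.erase i, (y ω j * y ω i) * (X ω j ⬝ᵥ X ω i)} := by
  intro i t
  have hvv : v ⬝ᵥ v = 1 := by
    rw [Real.sqrt_eq_one] at hv
    simpa [dotProduct, pow_two] using hv
  have hL := law_sample μ X hX
  have hT := measurePreserving_pi (fun _ : Fin n => Measure.pi (fun _ : Fin d => gaussianReal 0 1))
    (fun _ : Fin n => Measure.pi (fun _ : Fin d => gaussianReal 0 1))
    (f := fun _ => flipMap v) (fun _ => aux_flip v hvv)
  set Q := Measure.pi (fun _ : Fin n => Measure.pi (fun _ : Fin d => gaussianReal 0 1)) with hQ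
  let S : (Fin n → Fin d → ℝ) → ℝ := fun Z =>
    ∑ j ∈ Finset.univ.erase i, (sgn v (Z j) * sgn v (Z i)) * (Z j ⬝ᵥ Z i)
  have hsg : Measurable (sgn v) := by
    have hd : Measurable (fun x : Fin d → ℝ => v ⬝ᵥ x) := by
      unfold dotProduct; fun_prop
    exact Measurable.ite (measurableSet_lt measurable_const hd) measurable_const measurable_const
  have hS : Measurable S := by
    simp only [S]; unfold dotProduct; fun_prop
  have hA : MeasurableSet {Z | t ≤ S Z} := measurableSet_le measurable_const hS
  have e1 := hL.measure_preimage hA.nullMeasurableSet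
  have e2 := (hT.comp hL).measure_preimage hA.nullMeasurableSet
  have e3 : {ω | t ≤ ∑ j ∈ Finset.univ.erase i, (y ω j * y ω i) * (X ω j ⬝ᵥ X ω i)}
      = (fun ω i j => X ω i j) ⁻¹' {Z | t ≤ S Z} := by
    ext ω
    simp only [hy]
    rfl
  rw [e3, e1, ← e2]
  refine measure_mono fun ω hω => ?_
  refine le_trans (show t ≤ _ from hω) ?_
  exact Finset.sum_le_sum fun j _ => flip_ineq v hvv (X ω j) (X ω i)

end
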